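/- Let m, c, n₀, θ > 0 and u ∈ ℝ³, and set γ = mc²/θ, u⁰ = √(|u|² + c²). Then c ∫_{ℝ³} (p⁰)² M(p) dp = [n₀ m² / (γ K₂(γ))] [ (3K₃(γ) + γK₂(γ)) (u⁰)³ + 3K₃(γ) u⁰ |u|² ]. -/

import Mathlib

/-!
The measure `dp / p⁰` on the mass shell `p⁰ = √(k² + |p|²)`, `k = mc`, is Lorentz invariant.
Substituting `p = boost q`, where the boost takes the rest frame of the four-velocity `(u⁰, u)` to
the laboratory frame, turns the exponent `u·p - u⁰p⁰` into `-c q⁰` and `p⁰` into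
`(u⁰q⁰ + u·q)/c` (`shellEnergy_boost`, `inner_boost`), while the Jacobian is `p⁰/q⁰`, because the
differential of the boost is a rank-one perturbation of the identity (`det_boostDeriv`). Writing
`a = c/θ`, the integral of `(p⁰)² M` becomes a multiple of
`∫ (u⁰q⁰ + u·q)³ / q⁰ · exp(-a q⁰) dq`. In the expansion of the cube the odd powers of `u·q`
integrate to zero, and `∫ (u·q)² exp(-a q⁰) dq = |u|²/3 ∫ |q|² exp(-a q⁰) dq` by isotropy
(`integral_inner_sq`).

What is left are the radial integrals of `r² exp(-aE)` and `r⁴ exp(-aE)` with `E = √(k² + r²)`.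
The substitution `λ = aE` rewrites the integral in the definition of `K_j(ak)` as one of
`r^(2j) exp(-aE) / E` (`bessel_integral_substitution`), and one integration by parts
(`radial_by_parts`) then expresses the two radial integrals through `K₂` and `K₃`; note `ak = γ`.
-/

noncomputable section

open MeasureTheory

/-- Euclidean inner product on ℝ³. -/
def dot3 (p q : Fin 3 → ℝ) : ℝ := ∑ i, p i * q i

/-- The relativistic energy `p⁰ = √(m²c² + |p|²)`. -/
noncomputable def pZero (m c : ℝ) (p : Fin 3 → ℝ) : ℝ :=
  Real.sqrt (m ^ 2 * c ^ 2 + dot3 p p)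

/-- Modified Bessel function of the second kind (integral formula). -/
noncomputable def Kbessel (j : ℕ) (γ : ℝ) : ℝ :=
  (2 ^ j * (Nat.factorial j : ℝ) / (Nat.factorial (2 * j) : ℝ)) * γ ^ (-(j : ℤ)) *
    ∫ l in Set.Ioi γ, Real.exp (-l) * (l ^ 2 - γ ^ 2) ^ ((j : ℝ) - 1 / 2)

/-- The local relativistic Maxwellian
`M(p) = [n₀γ/(4πm³c³K₂(γ))] exp((u·p − u⁰p⁰)/θ)` with `γ = mc²/θ`,
`u⁰ = √(|u|² + c²)`. -/
noncomputable def Mloc (m c n₀ θ : ℝ) (u : Fin 3 → ℝ) (p : Fin 3 → ℝ) : ℝ :=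
  n₀ * (m * c ^ 2 / θ) / (4 * Real.pi * m ^ 3 * c ^ 3 * Kbessel 2 (m * c ^ 2 / θ)) *
    Real.exp ((dot3 u p - Real.sqrt (dot3 u u + c ^ 2) * pZero m c p) / θ)

open Set Filter Topology

/-- `√(k² + r²)`: the energy `p⁰` for `k = mc`, `r = |p|`, and the time component `u⁰` for
`k = c`, `r = |u|`. -/
def shellEnergy (k r : ℝ) : ℝ := Real.sqrt (k ^ 2 + r ^ 2)

/-! ### Radial integrals and Bessel functions -/

section radial
variable {k a : ℝ}

lemma shellEnergy_pos (hk : 0 < k) (r : ℝ) : 0 < shellEnergy k r :=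
  Real.sqrt_pos.2 (by positivity)

lemma shellEnergy_sq (k r : ℝ) : shellEnergy k r ^ 2 = k ^ 2 + r ^ 2 :=
  Real.sq_sqrt (by positivity)

lemma le_shellEnergy (k r : ℝ) : r ≤ shellEnergy k r :=
  Real.le_sqrt_of_sq_le (by nlinarith [sq_nonneg k])

lemma const_le_shellEnergy (k r : ℝ) : k ≤ shellEnergy k r :=
  Real.le_sqrt_of_sq_le (by nlinarith [sq_nonneg r])

lemma hasDerivAt_shellEnergy (hk : 0 < k) (r : ℝ) :
    HasDerivAt (shellEnergy k) (r / shellEnergy k r) r := by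
  have h : HasDerivAt (fun r : ℝ => k ^ 2 + r ^ 2) (2 * r) r := by
    simpa using (hasDerivAt_pow 2 r).const_add (k ^ 2)
  have h2 := h.sqrt (by positivity : k ^ 2 + r ^ 2 ≠ 0)
  refine h2.congr_deriv ?_
  rw [← shellEnergy]
  have := (shellEnergy_pos hk r).ne'
  field_simp

@[fun_prop]
lemma continuous_shellEnergy (k : ℝ) : Continuous (shellEnergy k) := by
  unfold shellEnergy; fun_prop

lemma integrableOn_pow_mul_exp_shellEnergy (ha : 0 < a) (n : ℕ) :
    IntegrableOn (fun r => r ^ n * Real.exp (-(a * shellEnergy k r))) (Ioi 0) := by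
  have h := integrableOn_rpow_mul_exp_neg_mul_rpow (p := 1) (s := n) (b := a)
    (by have : (0:ℝ) ≤ n := n.cast_nonneg
        linarith) one_pos ha
  refine Integrable.mono' h ?_ ?_
  · exact (by fun_prop : Continuous fun r => r ^ n * Real.exp (-(a * shellEnergy k r))).aestronglyMeasurable
  · refine (ae_restrict_mem measurableSet_Ioi).mono fun r hr => ?_
    have hr : 0 < r := hr
    rw [Real.norm_of_nonneg (by positivity), Real.rpow_natCast, Real.rpow_one]
    gcongr
    have := mul_le_mul_of_nonneg_left (le_shellEnergy k r) ha.le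
    linarith

lemma integrableOn_pow_mul_exp_div_shellEnergy (hk : 0 < k) (ha : 0 < a) (n : ℕ) :
    IntegrableOn (fun r => r ^ n * Real.exp (-(a * shellEnergy k r)) / shellEnergy k r)
      (Ioi 0) := by
  refine Integrable.mono' ((integrableOn_pow_mul_exp_shellEnergy (k := k) ha n).div_const k) ?_ ?_
  · exact (Continuous.div (by fun_prop) (by fun_prop)
      fun r => (shellEnergy_pos hk r).ne').aestronglyMeasurable
  · refine (ae_restrict_mem measurableSet_Ioi).mono fun r hr => ?_
    have hr : 0 < r := hr
    have := shellEnergy_pos hk r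
    rw [Real.norm_of_nonneg (by positivity)]
    gcongr
    exact const_le_shellEnergy k r

/-- Substitution `λ = a √(k² + r²)` in the integral defining the Bessel function. -/
lemma bessel_integral_substitution (hk : 0 < k) (ha : 0 < a) (j : ℕ) (hj : 1 ≤ j) :
    ∫ l in Ioi (a * k), Real.exp (-l) * (l ^ 2 - (a * k) ^ 2) ^ ((j : ℝ) - 1 / 2)
      = a ^ (2 * j) *
        ∫ r in Ioi 0, r ^ (2 * j) * Real.exp (-(a * shellEnergy k r)) / shellEnergy k r := by
  have him : (fun r => a * shellEnergy k r) '' Ioi 0 = Ioi (a * k) := by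
    ext l
    constructor
    · rintro ⟨r, hr, rfl⟩
      have hr : 0 < r := hr
      exact mul_lt_mul_of_pos_left (Real.lt_sqrt_of_sq_lt (by nlinarith)) ha
    · intro hl
      have hl' : k < l / a := (lt_div_iff₀' ha).2 hl
      have h2 : 0 < (l / a) ^ 2 - k ^ 2 := by nlinarith
      refine ⟨Real.sqrt ((l / a) ^ 2 - k ^ 2), Real.sqrt_pos.2 h2, ?_⟩
      simp only [shellEnergy]
      rw [Real.sq_sqrt h2.le, add_sub_cancel, Real.sqrt_sq (by linarith)]
      field_simp
  have hinj : InjOn (fun r => a * shellEnergy k r) (Ioi 0) := by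
    intro x hx y hy hxy
    have hx : 0 < x := hx
    have hy : 0 < y := hy
    have h1 : shellEnergy k x = shellEnergy k y := mul_left_cancel₀ ha.ne' hxy
    have h2 : x ^ 2 = y ^ 2 := by
      have := congrArg (· ^ 2) h1
      simp only [shellEnergy_sq] at this
      linarith
    exact (pow_left_inj₀ hx.le hy.le two_ne_zero).1 h2
  rw [← him, integral_image_eq_integral_abs_deriv_smul measurableSet_Ioi
    (fun r _ => ((hasDerivAt_shellEnergy hk r).const_mul a).hasDerivWithinAt) hinj,
    ← integral_const_mul]
  refine setIntegral_congr_fun measurableSet_Ioi fun r hr => ?_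
  have hr : 0 < r := hr
  have hE := shellEnergy_pos hk r
  have h1 : (a * shellEnergy k r) ^ 2 - (a * k) ^ 2 = (a * r) ^ (2 : ℝ) := by
    rw [Real.rpow_two, mul_pow, shellEnergy_sq]; ring
  have h2 : (2 : ℝ) * ((j : ℝ) - 1 / 2) = ((2 * j - 1 : ℕ) : ℝ) := by
    rw [Nat.cast_sub (by lia)]; push_cast; ring
  have h3 : (a * r) ^ (2 * j) = (a * r) ^ (2 * j - 1) * (a * r) := by
    rw [← pow_succ]; congr 1; lia
  simp only [smul_eq_mul]
  rw [h1, ← Real.rpow_mul (by positivity), h2, Real.rpow_natCast, abs_of_pos (by positivity)]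
  rw [mul_pow, mul_pow] at h3
  have h4 : a ^ (2 * j) * (r ^ (2 * j) * Real.exp (-(a * shellEnergy k r)) / shellEnergy k r)
    = (a ^ (2 * j) * r ^ (2 * j)) * Real.exp (-(a * shellEnergy k r)) / shellEnergy k r := by ring
  rw [h4, h3]
  ring

/-- Integration by parts: integrate the derivative of `r^(n+1) exp(-a√(k²+r²))`. -/
lemma radial_by_parts (hk : 0 < k) (ha : 0 < a) (n : ℕ) :
    ((n : ℝ) + 1) * ∫ r in Ioi 0, r ^ n * Real.exp (-(a * shellEnergy k r))
      = a * ∫ r in Ioi 0, r ^ (n + 2) * Real.exp (-(a * shellEnergy k r)) / shellEnergy k r := by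
  have hd : ∀ r ∈ Ici (0:ℝ), HasDerivAt
      (fun r => r ^ (n + 1) * Real.exp (-(a * shellEnergy k r)))
      (((n : ℝ) + 1) * (r ^ n * Real.exp (-(a * shellEnergy k r)))
        - a * (r ^ (n + 2) * Real.exp (-(a * shellEnergy k r)) / shellEnergy k r)) r := by
    intro r _
    have h := (hasDerivAt_pow (n + 1) r).mul
      (((hasDerivAt_shellEnergy hk r).const_mul a).neg.exp)
    refine h.congr_deriv ?_
    simp only [add_tsub_cancel_right, Nat.cast_add, Nat.cast_one, Pi.neg_apply]
    ring
  have hi1 := (integrableOn_pow_mul_exp_shellEnergy (k := k) ha n).const_mul ((n : ℝ) + 1)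
  have hi2 := (integrableOn_pow_mul_exp_div_shellEnergy hk ha (n + 2)).const_mul a
  have ht : Tendsto (fun r => r ^ (n + 1) * Real.exp (-(a * shellEnergy k r))) atTop (𝓝 0) := by
    have h0 : Tendsto (fun r : ℝ => r ^ (n + 1) * Real.exp (-a * r)) atTop (𝓝 0) := by
      have := Real.tendsto_pow_mul_exp_neg_atTop_nhds_zero (n + 1)
      have h2 := (this.comp (tendsto_id.const_mul_atTop ha)).const_mul ((a ^ (n + 1))⁻¹)
      rw [mul_zero] at h2
      refine h2.congr fun r => ?_
      simp only [Function.comp, id, mul_pow]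
      field_simp
    refine tendsto_of_tendsto_of_tendsto_of_le_of_le' tendsto_const_nhds h0 ?_ ?_
    · filter_upwards [eventually_ge_atTop 0] with r hr
      positivity
    · filter_upwards [eventually_ge_atTop 0] with r hr
      gcongr
      have := mul_le_mul_of_nonneg_left (le_shellEnergy k r) ha.le
      linarith
  have h := integral_Ioi_of_hasDerivAt_of_tendsto' hd (hi1.sub hi2) ht
  rw [integral_sub hi1 hi2, integral_const_mul, integral_const_mul] at h
  simp only [ne_eq, Nat.add_eq_zero_iff, one_ne_zero, and_false, not_false_eq_true, zero_pow,
    zero_mul, sub_zero] at h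
  linarith

lemma radial_moment_two (hk : 0 < k) (ha : 0 < a) :
    ∫ r in Ioi 0, r ^ 2 * Real.exp (-(a * shellEnergy k r))
      = k ^ 2 * Kbessel 2 (a * k) / a := by
  have h1 := radial_by_parts hk ha 2
  have h2 := bessel_integral_substitution hk ha 2 (by norm_num)
  rw [Kbessel, h2]
  norm_num only at h1
  norm_num [Nat.factorial]
  generalize (∫ r in Ioi 0, r ^ 2 * Real.exp (-(a * shellEnergy k r))) = X at *
  generalize (∫ r in Ioi 0, r ^ 4 * Real.exp (-(a * shellEnergy k r)) / shellEnergy k r) = Y at *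
  have h3 : X = a * Y / 3 := by linarith
  rw [h3]
  norm_cast
  field_simp

lemma radial_moment_four (hk : 0 < k) (ha : 0 < a) :
    ∫ r in Ioi 0, r ^ 4 * Real.exp (-(a * shellEnergy k r))
      = 3 * k ^ 3 * Kbessel 3 (a * k) / a ^ 2 := by
  have h1 := radial_by_parts hk ha 4
  have h2 := bessel_integral_substitution hk ha 3 (by norm_num)
  rw [Kbessel, h2]
  norm_num only at h1
  norm_num [Nat.factorial]
  generalize (∫ r in Ioi 0, r ^ 4 * Real.exp (-(a * shellEnergy k r))) = X at *
  generalize (∫ r in Ioi 0, r ^ 6 * Real.exp (-(a * shellEnergy k r)) / shellEnergy k r) = Y at *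
  have h3 : X = a * Y / 5 := by linarith
  rw [h3]
  norm_cast
  field_simp
  ring

end radial

open scoped RealInnerProductSpace

/-- Momentum space `ℝ³` with its Euclidean norm. -/
abbrev E3 := EuclideanSpace ℝ (Fin 3)

/-! ### Lorentz boosts of the mass shell -/

section boosts
variable {k c : ℝ} {u : E3}

/-- Spatial part of the image of `(√(k² + |p|²), p)` under the Lorentz boost taking the four-vector
`(c, 0)` to `(√(c² + |u|²), u)`. The usual factor `(u⁰ - c)/(c|u|²)` is written as `1/(c(c + u⁰))`,
so that `u = 0` is not exceptional. -/
def boost (k c : ℝ) (u p : E3) : E3 :=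
  p + (shellEnergy k ‖p‖ / c + ⟪u, p⟫ / (c * (c + shellEnergy c ‖u‖))) • u

/-- Strict Cauchy-Schwarz on the mass shells; it makes boosted energies positive. -/
lemma abs_inner_lt (hk : 0 < k) (hc : 0 < c) (u p : E3) :
    |⟪u, p⟫| < shellEnergy c ‖u‖ * shellEnergy k ‖p‖ := by
  refine (abs_real_inner_le_norm u p).trans_lt ?_
  have h1 : ∀ {k : ℝ} (_ : 0 < k) (p : E3), ‖p‖ < shellEnergy k ‖p‖ := fun {k} hk p =>
    Real.lt_sqrt_of_sq_lt (by nlinarith)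
  exact mul_lt_mul'' (h1 hc u) (h1 hk p) (norm_nonneg _) (norm_nonneg _)

lemma inner_boost (hc : 0 < c) (u p : E3) :
    ⟪u, boost k c u p⟫
      = (‖u‖ ^ 2 * shellEnergy k ‖p‖ + shellEnergy c ‖u‖ * ⟪u, p⟫) / c := by
  have h0 := shellEnergy_sq c ‖u‖
  have h1 := shellEnergy_pos hc ‖u‖
  rw [boost, inner_add_right, inner_smul_right, real_inner_self_eq_norm_sq]
  have h2 : ‖u‖ ^ 2 = (shellEnergy c ‖u‖ - c) * (c + shellEnergy c ‖u‖) := by linarith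
  rw [h2]
  have : c + shellEnergy c ‖u‖ ≠ 0 := by positivity
  field_simp
  ring

/-- The time component of the boosted four-momentum: the boost preserves the mass shell. -/
lemma shellEnergy_boost (hk : 0 < k) (hc : 0 < c) (u p : E3) :
    shellEnergy k ‖boost k c u p‖
      = (shellEnergy c ‖u‖ * shellEnergy k ‖p‖ + ⟪u, p⟫) / c := by
  have h0 := shellEnergy_sq c ‖u‖
  have h1 := shellEnergy_pos hc ‖u‖
  have h3 := shellEnergy_sq k ‖p‖
  have h4 := (abs_lt.1 (abs_inner_lt hk hc u p)).1
  have hs : c + shellEnergy c ‖u‖ ≠ 0 := by positivity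
  rw [shellEnergy, Real.sqrt_eq_iff_eq_sq (by positivity) (by
    apply div_nonneg _ hc.le
    linarith)]
  rw [boost, norm_add_sq_real, norm_smul, inner_smul_right, real_inner_comm, mul_pow,
    Real.norm_eq_abs, sq_abs]
  have h2 : ‖u‖ ^ 2 = (shellEnergy c ‖u‖ - c) * (c + shellEnergy c ‖u‖) := by linarith
  have h5 : ‖p‖ ^ 2 = shellEnergy k ‖p‖ ^ 2 - k ^ 2 := by linarith
  rw [h2, h5]
  generalize shellEnergy c ‖u‖ = U at *
  generalize shellEnergy k ‖p‖ = e at *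
  generalize ⟪u, p⟫ = x at *
  field_simp
  ring

/-- The boost along `-u` inverts the boost along `u`. -/
lemma boost_neg_boost (hk : 0 < k) (hc : 0 < c) (u p : E3) :
    boost k c (-u) (boost k c u p) = p := by
  have h0 := shellEnergy_sq c ‖u‖
  have h1 := shellEnergy_pos hc ‖u‖
  have hs : c + shellEnergy c ‖u‖ ≠ 0 := by positivity
  rw [boost, norm_neg, shellEnergy_boost hk hc, inner_neg_left, inner_boost hc]
  nth_rw 1 [boost]
  rw [add_assoc, smul_neg, ← sub_eq_add_neg, ← sub_smul]
  convert add_zero p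
  convert zero_smul ℝ u
  have h2 : ‖u‖ ^ 2 = (shellEnergy c ‖u‖ - c) * (c + shellEnergy c ‖u‖) := by linarith
  rw [h2]
  field_simp
  ring

lemma boost_injective (hk : 0 < k) (hc : 0 < c) (u : E3) :
    Function.Injective (boost k c u) :=
  Function.LeftInverse.injective (boost_neg_boost hk hc u)

lemma boost_surjective (hk : 0 < k) (hc : 0 < c) (u : E3) :
    Function.Surjective (boost k c u) := fun p =>
  ⟨boost k c (-u) p, by simpa using boost_neg_boost hk hc (-u) p⟩

/-- The differential of the boost at `p`, a rank-one perturbation of the identity. -/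
def boostDeriv (k c : ℝ) (u p : E3) : E3 →L[ℝ] E3 :=
  ContinuousLinearMap.id ℝ E3 +
    ((1 / (c * shellEnergy k ‖p‖)) • innerSL ℝ p
      + (1 / (c * (c + shellEnergy c ‖u‖))) • innerSL ℝ u).smulRight u

lemma hasFDerivAt_boost (hk : 0 < k) (u p : E3) :
    HasFDerivAt (boost k c u) (boostDeriv k c u p) p := by
  have he := shellEnergy_pos hk ‖p‖
  have h1 : HasFDerivAt (fun p : E3 => shellEnergy k ‖p‖)
      ((1 / shellEnergy k ‖p‖) • innerSL ℝ p) p := by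
    have h := ((hasStrictFDerivAt_norm_sq p).hasFDerivAt.const_add (k ^ 2)).sqrt
      (by positivity : k ^ 2 + ‖p‖ ^ 2 ≠ 0)
    refine h.congr_fderiv ?_
    rw [← shellEnergy]
    ext v
    simp
    field_simp
  have h2 : HasFDerivAt (fun p : E3 => ⟪u, p⟫) (innerSL ℝ u) p := (innerSL ℝ u).hasFDerivAt
  have h3 := ((h1.mul_const c⁻¹).add
    (h2.mul_const (c * (c + shellEnergy c ‖u‖))⁻¹)).smul_const u
  refine ((hasFDerivAt_id p).add h3).congr_fderiv ?_
  rw [boostDeriv]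
  ext1 v
  simp
  module

/-- The Jacobian is the ratio of the new energy to the old one, by `det (1 + u ⊗ f) = 1 + f u`. -/
lemma det_boostDeriv (hk : 0 < k) (hc : 0 < c) (u p : E3) :
    (boostDeriv k c u p).det = shellEnergy k ‖boost k c u p‖ / shellEnergy k ‖p‖ := by
  have h := LinearMap.transvection.det (((1 / (c * shellEnergy k ‖p‖)) • innerSL ℝ p
      + (1 / (c * (c + shellEnergy c ‖u‖))) • innerSL ℝ u : E3 →L[ℝ] ℝ) : E3 →ₗ[ℝ] ℝ) u
  have h2 : (boostDeriv k c u p).det = _ := h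
  have h0 := shellEnergy_sq c ‖u‖
  have h1 := shellEnergy_pos hc ‖u‖
  have he := shellEnergy_pos hk ‖p‖
  have hs : c + shellEnergy c ‖u‖ ≠ 0 := by positivity
  rw [h2, shellEnergy_boost hk hc]
  simp [real_inner_comm]
  have h2 : ‖u‖ ^ 2 = (shellEnergy c ‖u‖ - c) * (c + shellEnergy c ‖u‖) := by linarith
  rw [h2]
  field_simp
  ring

/-- Lorentz invariance of the measure `dp / p⁰` on the mass shell. -/
lemma integral_comp_boost (hk : 0 < k) (hc : 0 < c) (u : E3) (g : E3 → ℝ) :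
    ∫ p, g p = ∫ q, shellEnergy k ‖boost k c u q‖ / shellEnergy k ‖q‖ * g (boost k c u q) := by
  have h := integral_image_eq_integral_abs_det_fderiv_smul volume MeasurableSet.univ
    (fun p _ => (hasFDerivAt_boost hk u p).hasFDerivWithinAt)
    (boost_injective hk hc u).injOn g
  rw [image_univ, (boost_surjective hk hc u).range_eq] at h
  simp only [Measure.restrict_univ, smul_eq_mul] at h
  rw [h]
  refine integral_congr_ae (.of_forall fun q => ?_)
  simp only
  rw [det_boostDeriv hk hc, abs_of_pos (div_pos (shellEnergy_pos hk _) (shellEnergy_pos hk _))]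

end boosts

/-! ### Moments of the rest-frame distribution -/

section moments
variable {k a : ℝ}

lemma integral_radial (g : ℝ → ℝ) :
    ∫ p : E3, g ‖p‖ = 4 * Real.pi * ∫ r in Ioi 0, r ^ 2 * g r := by
  rw [integral_fun_norm_addHaar]
  have : (volume : Measure E3).real (Metric.ball 0 1) = Real.pi * 4 / 3 := by
    rw [Measure.real, EuclideanSpace.volume_ball_fin_three]
    simp [show 0 ≤ Real.pi * 4 / 3 by positivity]
  rw [this]
  simp
  ring

lemma integral_norm_sq_mul_exp (hk : 0 < k) (ha : 0 < a) :
    ∫ q : E3, ‖q‖ ^ 2 * Real.exp (-(a * shellEnergy k ‖q‖))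
      = 4 * Real.pi * (3 * k ^ 3 * Kbessel 3 (a * k) / a ^ 2) := by
  rw [integral_radial (fun r => r ^ 2 * Real.exp (-(a * shellEnergy k r))),
    ← radial_moment_four hk ha]
  congr 2
  ext r
  ring

lemma integral_shellEnergy_sq_mul_exp (hk : 0 < k) (ha : 0 < a) :
    ∫ q : E3, shellEnergy k ‖q‖ ^ 2 * Real.exp (-(a * shellEnergy k ‖q‖))
      = 4 * Real.pi * (k ^ 4 * Kbessel 2 (a * k) / a
          + 3 * k ^ 3 * Kbessel 3 (a * k) / a ^ 2) := by
  rw [integral_radial (fun r => shellEnergy k r ^ 2 * Real.exp (-(a * shellEnergy k r))),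
    ← radial_moment_four hk ha]
  have h : k ^ 4 * Kbessel 2 (a * k) / a = k ^ 2 * (k ^ 2 * Kbessel 2 (a * k) / a) := by ring
  rw [h, ← radial_moment_two hk ha, ← integral_const_mul (k ^ 2), ← integral_add
    ((integrableOn_pow_mul_exp_shellEnergy ha 2).const_mul _)
    (integrableOn_pow_mul_exp_shellEnergy ha 4)]
  congr 2
  ext r
  rw [shellEnergy_sq]
  ring

lemma integrable_shellEnergy_sq_mul_exp (ha : 0 < a) :
    Integrable fun q : E3 => shellEnergy k ‖q‖ ^ 2 * Real.exp (-(a * shellEnergy k ‖q‖)) := by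
  rw [integrable_fun_norm_addHaar volume
    (f := fun r => shellEnergy k r ^ 2 * Real.exp (-(a * shellEnergy k r)))]
  refine (((integrableOn_pow_mul_exp_shellEnergy (k := k) ha 2).const_mul (k ^ 2)).add
    (integrableOn_pow_mul_exp_shellEnergy (k := k) ha 4)).congr (.of_forall fun r => ?_)
  simp [shellEnergy_sq]
  ring

lemma integrable_mul_exp_of_le (ha : 0 < a) {f : E3 → ℝ} (hf : Continuous f) (C : ℝ)
    (hC : ∀ q, |f q| ≤ C * shellEnergy k ‖q‖ ^ 2) :
    Integrable fun q : E3 => f q * Real.exp (-(a * shellEnergy k ‖q‖)) := by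
  refine Integrable.mono' ((integrable_shellEnergy_sq_mul_exp (k := k) ha).const_mul C)
    (by fun_prop : Continuous _).aestronglyMeasurable (.of_forall fun q => ?_)
  rw [norm_mul, Real.norm_eq_abs, Real.norm_of_nonneg (Real.exp_pos _).le, ← mul_assoc]
  exact mul_le_mul_of_nonneg_right (hC q) (Real.exp_pos _).le

lemma integral_eq_zero_of_odd {f : E3 → ℝ} (hf : ∀ q, f (-q) = -f q) : ∫ q, f q = 0 := by
  have h := integral_neg_eq_self f volume
  simp only [hf, integral_neg] at h
  linarith

lemma abs_inner_le (u q : E3) : |⟪u, q⟫| ≤ ‖u‖ * shellEnergy k ‖q‖ :=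
  (abs_real_inner_le_norm u q).trans
    (mul_le_mul_of_nonneg_left (le_shellEnergy k ‖q‖) (norm_nonneg u))

/-- The second moment in the direction `u` depends only on `‖u‖`, by invariance under the reflection exchanging `u` and `v`. -/
lemma integral_inner_sq_eq (w : ℝ → ℝ) {u v : E3} (h : ‖u‖ = ‖v‖) :
    ∫ q, ⟪u, q⟫ ^ 2 * w ‖q‖ = ∫ q, ⟪v, q⟫ ^ 2 * w ‖q‖ := by
  set R := (ℝ ∙ (u - v))ᗮ.reflection
  have hR : R u = v := Submodule.reflection_sub h
  rw [← R.measurePreserving.integral_comp R.toHomeomorph.measurableEmbedding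
    fun q => ⟪v, q⟫ ^ 2 * w ‖q‖]
  refine integral_congr_ae (.of_forall fun q => ?_)
  simp only
  rw [← hR, R.norm_map, R.inner_map_map]

/-- By isotropy this is a third of the sum over an orthonormal basis, times `‖u‖²`. -/
lemma integral_inner_sq (hk : 0 < k) (ha : 0 < a) (u : E3) :
    ∫ q : E3, ⟪u, q⟫ ^ 2 * Real.exp (-(a * shellEnergy k ‖q‖))
      = ‖u‖ ^ 2 * (4 * Real.pi * (k ^ 3 * Kbessel 3 (a * k) / a ^ 2)) := by
  have hint : ∀ v : E3, Integrable fun q : E3 =>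
      ⟪v, q⟫ ^ 2 * Real.exp (-(a * shellEnergy k ‖q‖)) := fun v =>
    integrable_mul_exp_of_le ha (by fun_prop) (‖v‖ ^ 2) fun q => by
      rw [abs_pow, ← mul_pow]
      exact pow_le_pow_left₀ (abs_nonneg _) (abs_inner_le v q) 2
  let b := EuclideanSpace.basisFun (Fin 3) ℝ
  have h1 : ∀ i, ∫ q : E3, ⟪u, q⟫ ^ 2 * Real.exp (-(a * shellEnergy k ‖q‖))
      = ‖u‖ ^ 2 * ∫ q : E3, ⟪b i, q⟫ ^ 2 * Real.exp (-(a * shellEnergy k ‖q‖)) := by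
    intro i
    rw [integral_inner_sq_eq (fun r => Real.exp (-(a * shellEnergy k r)))
      (v := ‖u‖ • b i) (by simp [norm_smul]), ← integral_const_mul]
    congr 1
    ext q
    rw [real_inner_smul_left]
    ring
  have h2 : ∑ i, ∫ q : E3, ⟪b i, q⟫ ^ 2 * Real.exp (-(a * shellEnergy k ‖q‖))
      = ∫ q : E3, ‖q‖ ^ 2 * Real.exp (-(a * shellEnergy k ‖q‖)) := by
    rw [← integral_finsetSum _ fun i _ => hint (b i)]
    congr 1
    ext q
    rw [← Finset.sum_mul, b.sum_sq_inner_right]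
  rw [integral_norm_sq_mul_exp hk ha, Fin.sum_univ_three] at h2
  have e0 := h1 0
  have e1 := h1 1
  have e2 := h1 2
  linear_combination (1 / 3) * (e0 + e1 + e2) + (1 / 3) * ‖u‖ ^ 2 * h2

/-- The third moment of the measure `exp(-a q⁰) dq / q⁰` along the covector `(U, u)`: only the terms
even in `u·q` survive, and the odd ones are integrable because `|u·q| ≤ |u| q⁰`. -/
lemma integral_cube (hk : 0 < k) (ha : 0 < a) (U : ℝ) (u : E3) :
    ∫ q : E3, (U * shellEnergy k ‖q‖ + ⟪u, q⟫) ^ 3 / shellEnergy k ‖q‖ *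
        Real.exp (-(a * shellEnergy k ‖q‖))
      = 4 * Real.pi * (U ^ 3 * (k ^ 4 * Kbessel 2 (a * k) / a
          + 3 * k ^ 3 * Kbessel 3 (a * k) / a ^ 2)
          + 3 * U * ‖u‖ ^ 2 * (k ^ 3 * Kbessel 3 (a * k) / a ^ 2)) := by
  have hpos := fun q : E3 => shellEnergy_pos hk ‖q‖
  have hne := fun q : E3 => (hpos q).ne'
  have i1 : Integrable fun q : E3 => U ^ 3 *
      (shellEnergy k ‖q‖ ^ 2 * Real.exp (-(a * shellEnergy k ‖q‖))) :=
    (integrable_shellEnergy_sq_mul_exp ha).const_mul _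
  have i2 : Integrable fun q : E3 => 3 * U *
      (⟪u, q⟫ ^ 2 * Real.exp (-(a * shellEnergy k ‖q‖))) := by
    refine Integrable.const_mul ?_ _
    refine integrable_mul_exp_of_le ha (by fun_prop) (‖u‖ ^ 2) fun q => ?_
    rw [abs_pow, ← mul_pow]
    exact pow_le_pow_left₀ (abs_nonneg _) (abs_inner_le u q) 2
  have i3 : Integrable fun q : E3 =>
      (3 * U ^ 2 * (shellEnergy k ‖q‖ * ⟪u, q⟫) + ⟪u, q⟫ ^ 3 / shellEnergy k ‖q‖) *
        Real.exp (-(a * shellEnergy k ‖q‖)) := by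
    refine integrable_mul_exp_of_le ha ?_ (3 * U ^ 2 * ‖u‖ + ‖u‖ ^ 3) fun q => ?_
    · exact Continuous.add (by fun_prop) (Continuous.div (by fun_prop) (by fun_prop) hne)
    · refine (abs_add_le _ _).trans ?_
      rw [abs_mul, abs_of_nonneg (by positivity : 0 ≤ 3 * U ^ 2), abs_mul, abs_div, abs_pow,
        abs_of_pos (hpos q), add_mul]
      have h := abs_inner_le (k := k) u q
      have hp := hpos q
      refine add_le_add ?_ ?_
      · calc 3 * U ^ 2 * (shellEnergy k ‖q‖ * |⟪u, q⟫|)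
            ≤ 3 * U ^ 2 * (shellEnergy k ‖q‖ * (‖u‖ * shellEnergy k ‖q‖)) := by gcongr
          _ = _ := by ring
      · rw [div_le_iff₀ hp]
        calc |⟪u, q⟫| ^ 3 ≤ (‖u‖ * shellEnergy k ‖q‖) ^ 3 := by gcongr
          _ = _ := by ring
  have hodd : ∫ q : E3,
      (3 * U ^ 2 * (shellEnergy k ‖q‖ * ⟪u, q⟫) + ⟪u, q⟫ ^ 3 / shellEnergy k ‖q‖) *
        Real.exp (-(a * shellEnergy k ‖q‖)) = 0 := by
    refine integral_eq_zero_of_odd fun q => ?_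
    rw [norm_neg, inner_neg_right]
    ring
  have hsplit : ∀ q : E3, (U * shellEnergy k ‖q‖ + ⟪u, q⟫) ^ 3 / shellEnergy k ‖q‖ *
        Real.exp (-(a * shellEnergy k ‖q‖))
      = U ^ 3 * (shellEnergy k ‖q‖ ^ 2 * Real.exp (-(a * shellEnergy k ‖q‖)))
        + 3 * U * (⟪u, q⟫ ^ 2 * Real.exp (-(a * shellEnergy k ‖q‖)))
        + (3 * U ^ 2 * (shellEnergy k ‖q‖ * ⟪u, q⟫) + ⟪u, q⟫ ^ 3 / shellEnergy k ‖q‖) *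
          Real.exp (-(a * shellEnergy k ‖q‖)) := by
    intro q
    have := hne q
    field_simp
    ring
  simp_rw [hsplit]
  have h12 := integral_add (i1.add i2) i3
  simp only [Pi.add_apply] at h12
  rw [h12, integral_add i1 i2, hodd, integral_const_mul,
    integral_const_mul, integral_shellEnergy_sq_mul_exp hk ha, integral_inner_sq hk ha]
  ring

end moments

/-! ### The energy moment of the Maxwellian -/

lemma dot3_eq_inner (p q : Fin 3 → ℝ) : dot3 p q = ⟪WithLp.toLp 2 p, WithLp.toLp 2 q⟫ := by
  simp [dot3, PiLp.inner_apply, mul_comm]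

lemma dot3_self (p : Fin 3 → ℝ) : dot3 p p = ‖(WithLp.toLp 2 p : E3)‖ ^ 2 := by
  rw [dot3_eq_inner, real_inner_self_eq_norm_sq]

lemma pZero_eq (m c : ℝ) (p : Fin 3 → ℝ) :
    pZero m c p = shellEnergy (m * c) ‖(WithLp.toLp 2 p : E3)‖ := by
  rw [pZero, shellEnergy, dot3_self, mul_pow]

/-- `c ∫ (p⁰)² M(p) dp = [n₀m²/(γK₂(γ))][(3K₃(γ)+γK₂(γ))(u⁰)³ + 3K₃(γ)u⁰|u|²]`. -/
theorem stmt12 (m c n₀ θ γ u0 : ℝ) (hm : 0 < m) (hc : 0 < c) (hn : 0 < n₀) (hθ : 0 < θ)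
    (u : Fin 3 → ℝ) (hγ : γ = m * c ^ 2 / θ) (hu0 : u0 = Real.sqrt (dot3 u u + c ^ 2)) :
    c * ∫ p : Fin 3 → ℝ, (pZero m c p) ^ 2 * Mloc m c n₀ θ u p
      = n₀ * m ^ 2 / (γ * Kbessel 2 γ) *
          ((3 * Kbessel 3 γ + γ * Kbessel 2 γ) * u0 ^ 3
            + 3 * Kbessel 3 γ * u0 * dot3 u u) := by
  have hk : 0 < m * c := mul_pos hm hc
  have ha : 0 < c / θ := div_pos hc hθ
  have hγ' : c / θ * (m * c) = γ := by rw [hγ]; ring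
  set v : E3 := WithLp.toLp 2 u with hv
  have hu0' : u0 = shellEnergy c ‖v‖ := by rw [hu0, dot3_self, shellEnergy, add_comm]
  set A : ℝ := n₀ * γ / (4 * Real.pi * m ^ 3 * c ^ 3 * Kbessel 2 γ) with hA
  let g : E3 → ℝ := fun p => shellEnergy (m * c) ‖p‖ ^ 2 *
    (A * Real.exp ((⟪v, p⟫ - u0 * shellEnergy (m * c) ‖p‖) / θ))
  have h1 : ∫ p : Fin 3 → ℝ, (pZero m c p) ^ 2 * Mloc m c n₀ θ u p = ∫ p : E3, g p := by
    rw [← (PiLp.volume_preserving_toLp (Fin 3)).integral_comp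
      (MeasurableEquiv.toLp 2 _).measurableEmbedding g]
    refine integral_congr_ae (.of_forall fun p => ?_)
    simp only [g]
    rw [Mloc, ← hu0, ← hγ, pZero_eq, dot3_eq_inner]
  have h2 : ∀ q : E3,
      shellEnergy (m * c) ‖boost (m * c) c v q‖ / shellEnergy (m * c) ‖q‖
          * g (boost (m * c) c v q)
        = A / c ^ 3 * ((u0 * shellEnergy (m * c) ‖q‖ + ⟪v, q⟫) ^ 3 / shellEnergy (m * c) ‖q‖ *
            Real.exp (-(c / θ * shellEnergy (m * c) ‖q‖))) := by
    intro q
    simp only [g]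
    -- `u·p - u⁰p⁰` is Lorentz invariant; in the rest frame of `u` it equals `-c q⁰`.
    have hexp : (⟪v, boost (m * c) c v q⟫ - u0 * shellEnergy (m * c) ‖boost (m * c) c v q‖) / θ
        = -(c / θ * shellEnergy (m * c) ‖q‖) := by
      have h0 : u0 ^ 2 = c ^ 2 + ‖v‖ ^ 2 := by rw [hu0', shellEnergy_sq]
      rw [inner_boost hc, shellEnergy_boost hk hc, ← hu0']
      field_simp
      linear_combination (-shellEnergy (m * c) ‖q‖) * h0
    rw [hexp, shellEnergy_boost hk hc, ← hu0']
    have := (shellEnergy_pos hk ‖q‖).ne'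
    field_simp
  rw [h1, integral_comp_boost hk hc v]
  simp_rw [h2]
  rw [integral_const_mul, integral_cube hk ha, hγ', dot3_self, ← hv, hA]
  have hmc : c / θ = γ / (m * c) := by rw [← hγ']; field_simp
  have hγ0 : γ ≠ 0 := by rw [hγ]; positivity
  have hpi := Real.pi_pos.ne'
  rw [hmc]
  -- Both sides are linear in `K₂(γ)⁻¹`. Abstracting this inverse, which occurs once on each side,
  -- makes positivity of `K₂(γ)` unnecessary.
  rw [show ∀ x y : ℝ, x / (y * Kbessel 2 γ) = x / y * (Kbessel 2 γ)⁻¹ from fun x y => by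
    rw [div_mul_eq_div_div, div_eq_mul_inv],
    show ∀ x y : ℝ, x / (y * Kbessel 2 γ) = x / y * (Kbessel 2 γ)⁻¹ from fun x y => by
    rw [div_mul_eq_div_div, div_eq_mul_inv]]
  generalize (Kbessel 2 γ)⁻¹ = I
  field_simp
  ring
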